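/- Let p > 0 and q ∈ ℝ² with ‖q‖ ≤ p, and let ψ² = p·D(q/p) be the second moment given by the M₁ closure, where D(n) = ((1 − χ(‖n‖))/2)·I₂ + ((3χ(‖n‖) − 1)/2)·(nnᵀ/‖n‖²) for n ≠ 0 and D(0) = (1/3)·I₂. Then for every unit vector ν ∈ ℝ² and every s ∈ {+1, −1}, the pair (p + s ν·q, q + s ψ² ν) is realizable: p + s ν·q ≥ 0 and ‖q + s ψ² ν‖ ≤ p + s ν·q. -/

import Mathlib

open scoped InnerProductSpace Classical

/-- The Eddington factor of the M₁ model. -/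
noncomputable def eddingtonChi (f : ℝ) : ℝ :=
  (3 + 4 * f ^ 2) / (5 + 2 * Real.sqrt (4 - 3 * f ^ 2))

/-- The Eddington tensor, with `D(0) = (1/3)·I₂` and otherwise
`D(n) = ((1 − χ(‖n‖))/2)·I₂ + ((3χ(‖n‖) − 1)/2)·(nnᵀ/‖n‖²)`. -/
noncomputable def eddingtonD (n : EuclideanSpace ℝ (Fin 2)) : Matrix (Fin 2) (Fin 2) ℝ :=
  if n = 0 then (1 / 3 : ℝ) • (1 : Matrix (Fin 2) (Fin 2) ℝ)
  else
    ((1 - eddingtonChi ‖n‖) / 2) • (1 : Matrix (Fin 2) (Fin 2) ℝ) +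
      ((3 * eddingtonChi ‖n‖ - 1) / 2) • Matrix.of fun i j => n i * n j / ‖n‖ ^ 2

/-!
Let `b = (1 - χ(f)) / 2` be the eigenvalue of `D(n)` transverse to `n`, where `f = ‖n‖`.
Rationalizing `χ` shows `f² = (1 - 3b)(1 + b)`, so that the coefficient `(3χ - 1) / (2f²)` of `nnᵀ`
is `1 / (1 + b)` and `D(n) u = b u + (⟪u, n⟫ / (1 + b)) n`, also at `n = 0`. With `t = ⟪u, n⟫`
this yields
`(1 + t)² - ‖n + D(n) u‖² = 2b (1 + b + t)² / (1 + b) + b² (1 - ‖u‖²)`,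
which is nonnegative for `‖u‖ ≤ 1`. The case of general `p` follows by homogeneity, with `n = q / p`
and `u = s ν`.
-/

section EddingtonFactor

variable {f : ℝ}

theorem eddingtonChi_eq (hf : 3 * f ^ 2 ≤ 4) :
    eddingtonChi f = (5 - 2 * √(4 - 3 * f ^ 2)) / 3 := by
  have sq_root : √(4 - 3 * f ^ 2) ^ 2 = 4 - 3 * f ^ 2 := Real.sq_sqrt (by linarith)
  rw [eddingtonChi, div_eq_div_iff (by positivity) (by norm_num)]
  linear_combination 4 * sq_root

/-- The eigenvalue `(1 - χ(f)) / 2` of the Eddington tensor `D(n)`, `‖n‖ = f`, in the direction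
orthogonal to `n`; all entries of `D(n)` are rational in it and `n`. -/
noncomputable def transverseEddington (f : ℝ) : ℝ :=
  (1 - eddingtonChi f) / 2

theorem transverseEddington_eq (hf : 3 * f ^ 2 ≤ 4) :
    transverseEddington f = (√(4 - 3 * f ^ 2) - 1) / 3 := by
  rw [transverseEddington, eddingtonChi_eq hf]
  ring

theorem one_add_transverseEddington_pos (hf : 3 * f ^ 2 ≤ 4) : 0 < 1 + transverseEddington f := by
  rw [transverseEddington_eq hf]
  linarith [Real.sqrt_nonneg (4 - 3 * f ^ 2)]

theorem transverseEddington_nonneg (hf : f ^ 2 ≤ 1) : 0 ≤ transverseEddington f := by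
  rw [transverseEddington_eq (by linarith)]
  have one_le_root : 1 ≤ √(4 - 3 * f ^ 2) := Real.one_le_sqrt.mpr (by linarith)
  linarith

theorem sq_eq_transverseEddington (hf : 3 * f ^ 2 ≤ 4) :
    f ^ 2 = (1 - 3 * transverseEddington f) * (1 + transverseEddington f) := by
  have sq_root : √(4 - 3 * f ^ 2) ^ 2 = 4 - 3 * f ^ 2 := Real.sq_sqrt (by linarith)
  rw [transverseEddington_eq hf]
  linear_combination sq_root / 3

theorem transverseEddington_zero : transverseEddington 0 = 1 / 3 := by
  have sqrt_four : √(4 : ℝ) = 2 := by rw [Real.sqrt_eq_iff_mul_self_eq] <;> norm_num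
  rw [transverseEddington_eq (by norm_num)]
  norm_num [sqrt_four]

end EddingtonFactor

section EddingtonTensor

variable {n : EuclideanSpace ℝ (Fin 2)}

theorem eddingtonD_eq (hn : 3 * ‖n‖ ^ 2 ≤ 4) :
    eddingtonD n = transverseEddington ‖n‖ • (1 : Matrix (Fin 2) (Fin 2) ℝ) +
      (1 + transverseEddington ‖n‖)⁻¹ • Matrix.vecMulVec n n := by
  by_cases hn0 : n = 0
  · simp [eddingtonD, hn0, transverseEddington_zero]
  have norm_sq_ne_zero : ‖n‖ ^ 2 ≠ 0 := pow_ne_zero 2 (norm_ne_zero_iff.mpr hn0)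
  have one_add_ne_zero := (one_add_transverseEddington_pos hn).ne'
  have longitudinal_coeff :
      (3 * eddingtonChi ‖n‖ - 1) / 2 / ‖n‖ ^ 2 = (1 + transverseEddington ‖n‖)⁻¹ := by
    rw [div_eq_iff norm_sq_ne_zero, eq_inv_mul_iff_mul_eq₀ one_add_ne_zero,
      sq_eq_transverseEddington hn, transverseEddington]
    ring
  rw [eddingtonD, if_neg hn0, ← longitudinal_coeff, ← transverseEddington]
  congr 1
  ext i j
  simp only [Matrix.smul_apply, Matrix.of_apply, Matrix.vecMulVec_apply, smul_eq_mul]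
  ring

theorem toLp_eddingtonD_mulVec (hn : 3 * ‖n‖ ^ 2 ≤ 4) (u : EuclideanSpace ℝ (Fin 2)) :
    WithLp.toLp 2 ((eddingtonD n).mulVec u) = transverseEddington ‖n‖ • u +
      (⟪u, n⟫_ℝ / (1 + transverseEddington ‖n‖)) • n := by
  ext i
  simp only [eddingtonD_eq hn, Matrix.add_mulVec, Matrix.smul_mulVec, Matrix.one_mulVec,
    Matrix.vecMulVec_mulVec, EuclideanSpace.inner_eq_star_dotProduct, star_trivial,
    PiLp.add_apply, PiLp.smul_apply, Pi.add_apply, Pi.smul_apply, smul_eq_mul,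
    MulOpposite.smul_eq_mul_unop, MulOpposite.unop_op]
  ring

end EddingtonTensor

section InnerProductSpace

variable {E : Type*} [NormedAddCommGroup E] [InnerProductSpace ℝ E] {n u : E}

theorem one_add_inner_nonneg (hn : ‖n‖ ≤ 1) (hu : ‖u‖ ≤ 1) : 0 ≤ 1 + ⟪u, n⟫_ℝ := by
  have abs_inner_le : |⟪u, n⟫_ℝ| ≤ 1 :=
    (abs_real_inner_le_norm u n).trans (mul_le_one₀ hu (norm_nonneg n) hn)
  linarith [neg_le_of_abs_le abs_inner_le]

theorem one_add_inner_sq_sub_norm_add_smul_add_smul_sq {b : ℝ} (hb : 1 + b ≠ 0)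
    (hn : ‖n‖ ^ 2 = (1 - 3 * b) * (1 + b)) :
    (1 + ⟪u, n⟫_ℝ) ^ 2 - ‖n + (b • u + (⟪u, n⟫_ℝ / (1 + b)) • n)‖ ^ 2 =
      2 * b * (1 + b + ⟪u, n⟫_ℝ) ^ 2 / (1 + b) + b ^ 2 * (1 - ‖u‖ ^ 2) := by
  set t := ⟪u, n⟫_ℝ with ht
  have collect : n + (b • u + (t / (1 + b)) • n) = (1 + t / (1 + b)) • n + b • u := by module
  have norm_sq_expand : ‖n + (b • u + (t / (1 + b)) • n)‖ ^ 2 =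
      (1 + t / (1 + b)) ^ 2 * ‖n‖ ^ 2 + 2 * b * (1 + t / (1 + b)) * t + b ^ 2 * ‖u‖ ^ 2 := by
    rw [collect, norm_add_sq_real, norm_smul, norm_smul, real_inner_smul_left,
      real_inner_smul_right, real_inner_comm u n, ← ht, mul_pow, mul_pow, Real.norm_eq_abs,
      Real.norm_eq_abs, sq_abs, sq_abs]
    ring
  rw [norm_sq_expand, hn]
  field_simp
  ring

theorem norm_add_smul_add_smul_le_one_add_inner {b : ℝ} (hb : 0 ≤ b)
    (hn : ‖n‖ ^ 2 = (1 - 3 * b) * (1 + b)) (hu : ‖u‖ ≤ 1) :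
    ‖n + (b • u + (⟪u, n⟫_ℝ / (1 + b)) • n)‖ ≤ 1 + ⟪u, n⟫_ℝ := by
  have norm_le_one : ‖n‖ ≤ 1 := (sq_le_one_iff₀ (norm_nonneg n)).mp (by nlinarith)
  have one_sub_norm_sq_nonneg : 0 ≤ 1 - ‖u‖ ^ 2 :=
    sub_nonneg.mpr (pow_le_one₀ (norm_nonneg u) hu)
  refine le_of_sq_le_sq ?_ (one_add_inner_nonneg norm_le_one hu)
  rw [← sub_nonneg, one_add_inner_sq_sub_norm_add_smul_add_smul_sq (by positivity) hn]
  positivity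

end InnerProductSpace

theorem norm_add_eddingtonD_mulVec_le {n u : EuclideanSpace ℝ (Fin 2)} (hn : ‖n‖ ≤ 1)
    (hu : ‖u‖ ≤ 1) :
    ‖n + WithLp.toLp 2 ((eddingtonD n).mulVec u)‖ ≤ 1 + ⟪u, n⟫_ℝ := by
  have norm_sq_le_one : ‖n‖ ^ 2 ≤ 1 := pow_le_one₀ (norm_nonneg n) hn
  have three_mul_norm_sq_le : 3 * ‖n‖ ^ 2 ≤ 4 := by linarith
  rw [toLp_eddingtonD_mulVec three_mul_norm_sq_le]
  exact norm_add_smul_add_smul_le_one_add_inner (transverseEddington_nonneg norm_sq_le_one)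
    (sq_eq_transverseEddington three_mul_norm_sq_le) hu

theorem m1_closure_realizable_general {p : ℝ} (hp : 0 < p) {q u : EuclideanSpace ℝ (Fin 2)}
    (hq : ‖q‖ ≤ p) (hu : ‖u‖ ≤ 1) :
    0 ≤ p + ⟪u, q⟫_ℝ ∧
    ‖q + (EuclideanSpace.equiv (Fin 2) ℝ).symm ((p • eddingtonD (p⁻¹ • q)).mulVec u)‖
      ≤ p + ⟪u, q⟫_ℝ := by
  obtain ⟨n, rfl⟩ : ∃ n, q = p • n := ⟨p⁻¹ • q, (smul_inv_smul₀ hp.ne' q).symm⟩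
  have norm_le_one : ‖n‖ ≤ 1 := by
    rwa [norm_smul_of_nonneg hp.le, mul_le_iff_le_one_right hp] at hq
  suffices h : ‖p • n + (EuclideanSpace.equiv (Fin 2) ℝ).symm
      ((p • eddingtonD (p⁻¹ • p • n)).mulVec u)‖ ≤ p + ⟪u, p • n⟫_ℝ from
    ⟨(norm_nonneg _).trans h, h⟩
  calc _ = ‖p • (n + WithLp.toLp 2 ((eddingtonD n).mulVec u))‖ := by
        rw [inv_smul_smul₀ hp.ne', Matrix.smul_mulVec, map_smul, smul_add]; rfl
    _ = p * ‖n + WithLp.toLp 2 ((eddingtonD n).mulVec u)‖ := norm_smul_of_nonneg hp.le _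
    _ ≤ p * (1 + ⟪u, n⟫_ℝ) := by
        gcongr
        exact norm_add_eddingtonD_mulVec_le norm_le_one hu
    _ = p + ⟪u, p • n⟫_ℝ := by rw [real_inner_smul_right]; ring

/-- Let `p > 0`, `‖q‖ ≤ p`, and let `ψ² = p·D(q/p)` be the second moment of the M₁ closure.
Then for every unit vector `ν` and sign `s = ±1`, the pair `(p + s ν·q, q + s ψ² ν)` is
realizable. -/
theorem m1_closure_realizable (p : ℝ) (hp : 0 < p) (q : EuclideanSpace ℝ (Fin 2))
    (hq : ‖q‖ ≤ p) (ν : EuclideanSpace ℝ (Fin 2)) (hν : ‖ν‖ = 1) (s : ℝ)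
    (hs : s = 1 ∨ s = -1) :
    0 ≤ p + s * ⟪ν, q⟫_ℝ ∧
    ‖q + s • (EuclideanSpace.equiv (Fin 2) ℝ).symm ((p • eddingtonD (p⁻¹ • q)).mulVec ν)‖
      ≤ p + s * ⟪ν, q⟫_ℝ := by
  have norm_smul_le_one : ‖s • ν‖ ≤ 1 := by rcases hs with rfl | rfl <;> simp [hν]
  simpa only [real_inner_smul_left, WithLp.ofLp_smul, Matrix.mulVec_smul, map_smul] using
    m1_closure_realizable_general hp hq norm_smul_le_one
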